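/- Suppose there exists ρ > 0 such that every characteristic zero λ satisfies Re λ ≤ −ρ. Then there exist M > 0 and c > 0 such that every continuous function y : [−h, ∞) → ℂⁿ that is differentiable on (0, ∞) and satisfies y'(t) = Σ_{i=0}^m A_i y(t−h_i) for all t > 0 obeys ‖y(t)‖ ≤ M e^{−c t} · sup_{τ ∈ [−h, 0]} ‖y(τ)‖ for all t ≥ 0; i.e., the limiting equation is globally uniformly exponentially stable. -/

import Mathlib

open Filter MeasureTheory

/-- Multiplication of a vector of `EuclideanSpace ℂ (Fin n)` by a matrix. -/
noncomputable def mulVecE {n : ℕ} (A : Matrix (Fin n) (Fin n) ℂ)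
    (v : EuclideanSpace ℂ (Fin n)) : EuclideanSpace ℂ (Fin n) :=
  Matrix.toEuclideanLin A v

/-- `‖x_t‖ = sup_{τ ∈ [t-H, t]} ‖x τ‖`. -/
noncomputable def slidingSup {n : ℕ} (H : ℝ) (x : ℝ → EuclideanSpace ℂ (Fin n)) (t : ℝ) : ℝ :=
  sSup ((fun τ => ‖x τ‖) '' Set.Icc (t - H) t)

/-- Characteristic function `Δ(s) = det (s I - Σ_i A_i e^{-h_i s})` of the linear
delay equation `y'(t) = Σ_i A_i y(t - h_i)`. -/
noncomputable def charFn {n m : ℕ} (A : Fin (m + 1) → Matrix (Fin n) (Fin n) ℂ)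
    (hd : Fin (m + 1) → ℝ) (s : ℂ) : ℂ :=
  Matrix.det (s • (1 : Matrix (Fin n) (Fin n) ℂ) - ∑ i, Complex.exp (-(hd i : ℂ) * s) • A i)

/-!
For `Re s ≥ 0` and large `|s|` the characteristic matrix of the retarded equation is dominated by
`s`, so by compactness its inverse is bounded uniformly on `Re s ≥ 0` once it exists everywhere
there. Plancherel on the line `Re s = σ` turns this into an `L²` bound with a constant independent
of `σ ≥ 0`: `e^{-σt} z` is controlled by `e^{-σt} (z' - ∑ A_i z(· - h_i))` for every `z` that
vanishes in the past and for which both are integrable and square integrable.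

Suppose solutions grow at rate at most `σ ≥ 0`. After multiplication by the weight
`(e^{-ηt} + δ e^{ηt})⁻¹` a solution is integrable and square integrable against `e^{-σt}`. The
weight varies at relative rate at most `η`, so the commutator terms it creates are absorbed by the
`L²` bound when `η` is small, independently of `σ`. Letting `δ → 0` gives the growth rate `σ - η`.
Starting from a Gronwall rate, finitely many such steps reach a negative rate.
-/

section LpNorm

variable {α E F : Type*} {mα : MeasurableSpace α} {μ : Measure α} [NormedAddCommGroup E]
  [NormedAddCommGroup F]

theorem lpNorm_le_lpNorm_add_mul_lpNorm {G : Type*} [NormedAddCommGroup G] {f : α → E} {g : α → F}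
    {k : α → G} {p : ENNReal} {c : ℝ} (hp : 1 ≤ p) (hg : MemLp g p μ) (hk : MemLp k p μ)
    (hc : 0 ≤ c) (hfgk : ∀ x, ‖f x‖ ≤ ‖g x‖ + c * ‖k x‖) :
    lpNorm f p μ ≤ lpNorm g p μ + c * lpNorm k p μ :=
  calc lpNorm f p μ ≤ lpNorm ((fun x => ‖g x‖) + c • fun x => ‖k x‖) p μ :=
        lpNorm_mono_real (hg.norm.add (hk.norm.const_smul c)) hfgk
    _ ≤ lpNorm (fun x => ‖g x‖) p μ + lpNorm (c • fun x => ‖k x‖) p μ := lpNorm_add_le hg.norm hp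
    _ = lpNorm g p μ + c * lpNorm k p μ := by
      rw [lpNorm_const_smul, lpNorm_norm hg.1, lpNorm_norm hk.1, coe_nnnorm,
        Real.norm_of_nonneg hc]

theorem lpNorm_le_mul_lpNorm {f : α → E} {g : α → F} {p : ENNReal} {c : ℝ} (hp : 1 ≤ p)
    (hg : MemLp g p μ) (hc : 0 ≤ c) (hfg : ∀ x, ‖f x‖ ≤ c * ‖g x‖) :
    lpNorm f p μ ≤ c * lpNorm g p μ := by
  simpa using lpNorm_le_lpNorm_add_mul_lpNorm (g := (0 : α → E)) hp MemLp.zero hg hc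
    (by simpa using hfg)

theorem lpNorm_comp_measurePreserving {β : Type*} {mβ : MeasurableSpace β} {ν : Measure β}
    {f : β → E} {T : α → β} (p : ENNReal) (hf : AEStronglyMeasurable f ν)
    (hT : MeasurePreserving T μ ν) : lpNorm (f ∘ T) p μ = lpNorm f p ν := by
  rw [← toReal_eLpNorm (hf.comp_measurePreserving hT), ← toReal_eLpNorm hf,
    eLpNorm_comp_measurePreserving hf hT]

theorem memLp_comp_sub_right {f : ℝ → E} {p : ENNReal} (hf : MemLp f p) (a : ℝ) :
    MemLp (fun t => f (t - a)) p :=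
  hf.comp_measurePreserving (measurePreserving_sub_right volume a)

end LpNorm
section Fourier

open scoped FourierTransform SchwartzMap

variable {V E : Type*} [NormedAddCommGroup V] [InnerProductSpace ℝ V] [FiniteDimensional ℝ V]
  [MeasurableSpace V] [BorelSpace V] [NormedAddCommGroup E]

-- Both sides have the same pairing with every test function, by self-adjointness of `𝓕`.
theorem fourier_toLp_ae_eq_fourier [InnerProductSpace ℂ E] [CompleteSpace E] {f : V → E}
    (hf₁ : Integrable f) (hf₂ : MemLp f 2) :
    ((𝓕 (hf₂.toLp f) : Lp E 2 (volume : Measure V)) : V → E) =ᵐ[volume] 𝓕 f := by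
  have hcont : Continuous (𝓕 f) := VectorFourier.fourierIntegral_continuous
    Real.continuous_fourierChar (by exact continuous_inner) hf₁
  refine ae_eq_of_integral_contDiff_smul_eq ((Lp.memLp _).locallyIntegrable (by norm_num))
    hcont.locallyIntegrable fun φ hφ hφc => ?_
  let ψ : 𝓢(V, ℂ) := (hφc.comp_left (g := Complex.ofRealCLM) rfl).toSchwartzMap
    (Complex.ofRealCLM.contDiff.comp hφ)
  have hψ : ∀ x, ψ x = (φ x : ℂ) := fun _ => rfl
  have hL2 : ∫ x, (𝓕 ψ) x • hf₂.toLp f x = ∫ x, ψ x • (𝓕 (hf₂.toLp f) : Lp E 2 volume) x := by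
    simpa only [TemperedDistribution.fourier_apply, Lp.toTemperedDistribution_apply] using
      congrArg (fun T => T ψ) (Lp.fourier_toTemperedDistribution_eq (hf₂.toLp f))
  have hL1 : ∫ x, (𝓕 ψ) x • f x = ∫ x, ψ x • 𝓕 f x := by
    have := VectorFourier.integral_fourierIntegral_smul_eq_flip (μ := (volume : Measure V))
      (ν := (volume : Measure V)) (L := innerₗ V) (f := (ψ : V → ℂ)) (g := f)
      Real.continuous_fourierChar (by exact continuous_inner) ψ.integrable hf₁
    rwa [flip_innerₗ] at this
  have hae : ∫ x, (𝓕 ψ) x • hf₂.toLp f x = ∫ x, (𝓕 ψ) x • f x :=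
    integral_congr_ae (hf₂.coeFn_toLp.mono fun x hx => congrArg ((𝓕 ψ) x • ·) hx)
  simpa only [hψ, Complex.coe_smul] using hL2.symm.trans (hae.trans hL1)

theorem memLp_fourier [InnerProductSpace ℂ E] [CompleteSpace E] {f : V → E}
    (hf₁ : Integrable f) (hf₂ : MemLp f 2) : MemLp (𝓕 f) 2 :=
  (Lp.memLp _).ae_eq (fourier_toLp_ae_eq_fourier hf₁ hf₂)

theorem lpNorm_fourier_eq [InnerProductSpace ℂ E] [CompleteSpace E] {f : V → E}
    (hf₁ : Integrable f) (hf₂ : MemLp f 2) :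
    lpNorm (𝓕 f) 2 volume = lpNorm f 2 volume := by
  rw [← toReal_eLpNorm (memLp_fourier hf₁ hf₂).1, ← toReal_eLpNorm hf₁.1,
    ← eLpNorm_congr_ae (fourier_toLp_ae_eq_fourier hf₁ hf₂),
    ← eLpNorm_congr_ae hf₂.coeFn_toLp, ← Lp.norm_def, ← Lp.norm_def, Lp.norm_fourier_eq]

variable [NormedSpace ℂ E]

theorem fourier_fun_add_apply {f g : V → E} (hf : Integrable f) (hg : Integrable g) (ξ : V) :
    𝓕 (fun x => f x + g x) ξ = 𝓕 f ξ + 𝓕 g ξ := by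
  simp only [Real.fourier_eq, smul_add]
  exact integral_add ((Real.fourierIntegral_convergent_iff ξ).2 hf)
    ((Real.fourierIntegral_convergent_iff ξ).2 hg)

theorem fourier_fun_sum_apply {ι : Type*} (s : Finset ι) {f : ι → V → E}
    (hf : ∀ i ∈ s, Integrable (f i)) (ξ : V) :
    𝓕 (fun x => ∑ i ∈ s, f i x) ξ = ∑ i ∈ s, 𝓕 (f i) ξ := by
  simp only [Real.fourier_eq, Finset.smul_sum]
  exact integral_finsetSum _ fun i hi => (Real.fourierIntegral_convergent_iff ξ).2 (hf i hi)

theorem fourier_clm_comp_apply [CompleteSpace E] (T : E →L[ℂ] E) {f : V → E} (hf : Integrable f)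
    (ξ : V) : 𝓕 (fun x => T (f x)) ξ = T (𝓕 f ξ) := by
  simp only [Real.fourier_eq, Circle.smul_def]
  rw [← T.integral_comp_comm (by simpa only [Circle.smul_def] using
    (Real.fourierIntegral_convergent_iff ξ).2 hf)]
  simp only [map_smul]

theorem fourier_comp_sub_apply (f : ℝ → E) (a ξ : ℝ) :
    𝓕 (fun t => f (t - a)) ξ = Complex.exp (-(a : ℂ) * (2 * Real.pi * Complex.I * ξ)) • 𝓕 f ξ := by
  rw [Real.fourier_real_eq_integral_exp_smul, Real.fourier_real_eq_integral_exp_smul,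
    ← integral_smul, ← integral_add_right_eq_self _ a]
  simp only [add_sub_cancel_right, smul_smul, ← Complex.exp_add]
  congr! 4
  push_cast
  ring

end Fourier

section Sobolev

variable {E : Type*} [NormedAddCommGroup E]

theorem integral_norm_sq_eq_lpNorm_sq {α : Type*} {mα : MeasurableSpace α} {μ : Measure α}
    {f : α → E} (hf : AEStronglyMeasurable f μ) :
    ∫ x, ‖f x‖ ^ 2 ∂μ = lpNorm f 2 μ ^ 2 := by
  have hnonneg : 0 ≤ ∫ x, ‖f x‖ ^ 2 ∂μ := integral_nonneg fun x => by positivity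
  rw [lpNorm_eq_integral_norm_rpow_toReal (by norm_num) (by norm_num) hf]
  simp only [ENNReal.toReal_ofNat, Real.rpow_ofNat]
  rw [← Real.rpow_mul_natCast hnonneg]
  norm_num

-- The fundamental theorem of calculus for `‖w‖²`, whose derivative is at most `‖w‖² + ‖w'‖²`.
theorem norm_le_lpNorm_add_lpNorm_deriv [InnerProductSpace ℝ E] {w : ℝ → E}
    (hw : Differentiable ℝ w) (hw₂ : MemLp w 2) (hw₂' : MemLp (deriv w) 2) (t : ℝ) :
    ‖w t‖ ≤ lpNorm w 2 volume + lpNorm (deriv w) 2 volume := by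
  have hsq : Integrable fun s => ‖w s‖ ^ 2 := (memLp_two_iff_integrable_sq_norm hw₂.1).1 hw₂
  have hsq' : Integrable fun s => ‖deriv w s‖ ^ 2 :=
    (memLp_two_iff_integrable_sq_norm hw₂'.1).1 hw₂'
  have hderiv : ∀ s, HasDerivAt (fun s => ‖w s‖ ^ 2) (2 * inner ℝ (w s) (deriv w s)) s :=
    fun s => (hw s).hasDerivAt.norm_sq
  have hbound : ∀ s, |2 * inner ℝ (w s) (deriv w s)| ≤ ‖w s‖ ^ 2 + ‖deriv w s‖ ^ 2 := fun s => by
    rw [abs_mul, abs_two]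
    nlinarith [abs_real_inner_le_norm (w s) (deriv w s), sq_nonneg (‖w s‖ - ‖deriv w s‖)]
  have hInt : Integrable fun s => 2 * inner ℝ (w s) (deriv w s) :=
    (hsq.add hsq').mono' ((hw₂.1.inner hw₂'.1).const_mul 2) (.of_forall hbound)
  have hlim : Tendsto (fun s => ‖w s‖ ^ 2) atBot (nhds 0) :=
    tendsto_zero_of_hasDerivAt_of_integrableOn_Iic (a := t) (fun s _ => hderiv s)
      hInt.integrableOn hsq.integrableOn
  have hftc := integral_Iic_of_hasDerivAt_of_tendsto' (a := t) (fun s _ => hderiv s)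
    hInt.integrableOn hlim
  have hsum : ‖w t‖ ^ 2 ≤ lpNorm w 2 volume ^ 2 + lpNorm (deriv w) 2 volume ^ 2 := calc
    ‖w t‖ ^ 2 = ∫ s in Set.Iic t, 2 * inner ℝ (w s) (deriv w s) := by rw [hftc, sub_zero]
    _ ≤ ∫ s in Set.Iic t, (‖w s‖ ^ 2 + ‖deriv w s‖ ^ 2) :=
      setIntegral_mono hInt.integrableOn (hsq.add hsq').integrableOn
        fun s => (le_abs_self _).trans (hbound s)
    _ ≤ ∫ s, (‖w s‖ ^ 2 + ‖deriv w s‖ ^ 2) :=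
      setIntegral_le_integral (hsq.add hsq') (.of_forall fun s => by positivity)
    _ = _ := by
      rw [integral_add hsq hsq', integral_norm_sq_eq_lpNorm_sq hw₂.1,
        integral_norm_sq_eq_lpNorm_sq hw₂'.1]
  refine le_of_sq_le_sq ?_ (add_nonneg lpNorm_nonneg lpNorm_nonneg)
  nlinarith [mul_nonneg (lpNorm_nonneg (f := w) (p := 2) (μ := volume))
    (lpNorm_nonneg (f := deriv w) (p := 2) (μ := volume))]

theorem memLp_of_norm_le_exp_neg {f : ℝ → E} (hf : AEStronglyMeasurable f volume) {A η : ℝ}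
    (hη : 0 < η) (hzero : ∀ t ≤ 0, f t = 0) (hbound : ∀ t > 0, ‖f t‖ ≤ A * Real.exp (-η * t))
    {p : ENNReal} (hp₀ : p ≠ 0) (hp : p ≠ ⊤) : MemLp f p := by
  have hp' : 0 < p.toReal := ENNReal.toReal_pos hp₀ hp
  have hexp : MemLp (fun t => Real.exp (-η * t)) p (volume.restrict (Set.Ioi 0)) := by
    rw [← integrable_norm_rpow_iff (by fun_prop) hp₀ hp]
    refine (exp_neg_integrableOn_Ioi 0 (mul_pos hη hp')).congr (.of_forall fun t => ?_)
    simp only [Real.norm_eq_abs, Real.abs_exp, ← Real.exp_mul]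
    ring_nf
  have hIoi : MemLp f p (volume.restrict (Set.Ioi 0)) :=
    (hexp.const_mul A).mono' hf.restrict
      ((ae_restrict_iff' measurableSet_Ioi).2 (.of_forall hbound))
  rw [← memLp_indicator_iff_restrict measurableSet_Ioi] at hIoi
  convert hIoi using 1
  exact (Set.indicator_eq_self.2 fun t ht => not_le.1 fun h => ht (hzero t h)).symm

end Sobolev

section Compactness

theorem exists_pos_forall_mul_norm_le_of_isCompact {𝕜 X E F : Type*} [RCLike 𝕜]
    [TopologicalSpace X] [NormedAddCommGroup E] [NormedSpace 𝕜 E] [FiniteDimensional 𝕜 E]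
    [NormedAddCommGroup F] [NormedSpace 𝕜 F] {K : Set X} (hK : IsCompact K) {T : X → E →L[𝕜] F}
    (hT : ContinuousOn T K) (hinj : ∀ x ∈ K, Function.Injective (T x)) :
    ∃ d > 0, ∀ x ∈ K, ∀ v, d * ‖v‖ ≤ ‖T x v‖ := by
  have : ProperSpace E := FiniteDimensional.proper_rclike 𝕜 E
  have hcont : ContinuousOn (fun p : X × E => ‖T p.1 p.2‖) (K ×ˢ Metric.sphere 0 1) :=
    ((hT.comp continuousOn_fst fun p hp => hp.1).clm_apply continuousOn_snd).norm
  have hpos : ∀ p ∈ K ×ˢ Metric.sphere (0 : E) 1, 0 < ‖T p.1 p.2‖ := fun p hp =>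
    norm_pos_iff.2 <| (map_ne_zero_iff _ (hinj p.1 hp.1)).2 <|
      ne_zero_of_mem_unit_sphere ⟨p.2, hp.2⟩
  obtain ⟨d, hd, hle⟩ := (hK.prod (isCompact_sphere 0 1)).exists_forall_le' hcont hpos
  refine ⟨d, hd, fun x hx v => ?_⟩
  obtain rfl | hv := eq_or_ne v 0
  · simp
  have hunit : ((‖v‖⁻¹ : ℝ) : 𝕜) • v ∈ Metric.sphere (0 : E) 1 := by
    simp [norm_smul, hv]
  have := hle (x, _) ⟨hx, hunit⟩
  rwa [map_smul, norm_smul, RCLike.norm_ofReal, abs_inv, abs_norm,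
    le_inv_mul_iff₀' (norm_pos_iff.2 hv)] at this

end Compactness

section DelayEquation

open scoped FourierTransform

variable {ι E : Type*} [Fintype ι] [NormedAddCommGroup E]

section Characteristic

variable [NormedSpace ℂ E]

/-- The characteristic operator `s - ∑ i, e^{-h i s} L i` of the delay equation
`y'(t) = ∑ i, L i (y (t - h i))`. -/
noncomputable def delayCharOp (L : ι → E →L[ℂ] E) (h : ι → ℝ) (s : ℂ) : E →L[ℂ] E :=
  s • ContinuousLinearMap.id ℂ E - ∑ i, Complex.exp (-(h i : ℂ) * s) • L i

theorem delayCharOp_apply (L : ι → E →L[ℂ] E) (h : ι → ℝ) (s : ℂ) (v : E) :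
    delayCharOp L h s v = s • v - ∑ i, Complex.exp (-(h i : ℂ) * s) • L i v := by
  simp [delayCharOp]

theorem continuous_delayCharOp (L : ι → E →L[ℂ] E) (h : ι → ℝ) :
    Continuous (delayCharOp L h) := by
  unfold delayCharOp
  fun_prop

theorem norm_exp_neg_mul_le_one {a : ℝ} (ha : 0 ≤ a) {s : ℂ} (hs : 0 ≤ s.re) :
    ‖Complex.exp (-(a : ℂ) * s)‖ ≤ 1 := by
  rw [Complex.norm_exp, Real.exp_le_one_iff]
  simpa using mul_nonneg ha hs

theorem mul_norm_le_norm_delayCharOp (L : ι → E →L[ℂ] E) {h : ι → ℝ} (hh : ∀ i, 0 ≤ h i) {s : ℂ}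
    (hs : 0 ≤ s.re) (v : E) : (‖s‖ - ∑ i, ‖L i‖) * ‖v‖ ≤ ‖delayCharOp L h s v‖ := by
  have hsum : ‖∑ i, Complex.exp (-(h i : ℂ) * s) • L i v‖ ≤ (∑ i, ‖L i‖) * ‖v‖ := by
    rw [Finset.sum_mul]
    refine norm_sum_le_of_le _ fun i _ => ?_
    rw [norm_smul]
    exact (mul_le_of_le_one_left (norm_nonneg _) (norm_exp_neg_mul_le_one (hh i) hs)).trans
      ((L i).le_opNorm v)
  calc (‖s‖ - ∑ i, ‖L i‖) * ‖v‖ ≤ ‖s • v‖ - ‖∑ i, Complex.exp (-(h i : ℂ) * s) • L i v‖ := by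
        rw [sub_mul, norm_smul]
        exact sub_le_sub_left hsum _
    _ ≤ ‖delayCharOp L h s v‖ := by
      rw [delayCharOp_apply]
      exact norm_sub_norm_le _ _

theorem exists_pos_forall_norm_le_mul_norm_delayCharOp [FiniteDimensional ℂ E] (L : ι → E →L[ℂ] E)
    {h : ι → ℝ} (hh : ∀ i, 0 ≤ h i)
    (hinj : ∀ s : ℂ, 0 ≤ s.re → Function.Injective (delayCharOp L h s)) :
    ∃ C > 0, ∀ s : ℂ, 0 ≤ s.re → ∀ v, ‖v‖ ≤ C * ‖delayCharOp L h s v‖ := by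
  set R := 1 + ∑ i, ‖L i‖
  have hK : IsCompact ({s : ℂ | 0 ≤ s.re} ∩ Metric.closedBall 0 R) :=
    (isCompact_closedBall 0 R).inter_left (isClosed_le continuous_const Complex.continuous_re)
  obtain ⟨d, hd, hdT⟩ := exists_pos_forall_mul_norm_le_of_isCompact hK
    (continuous_delayCharOp L h).continuousOn fun s hs => hinj s hs.1
  refine ⟨max 1 d⁻¹, by positivity, fun s hs v => ?_⟩
  obtain hsR | hsR := le_total ‖s‖ R
  · calc ‖v‖ ≤ d⁻¹ * ‖delayCharOp L h s v‖ := by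
          rw [le_inv_mul_iff₀ hd]
          exact hdT s ⟨hs, mem_closedBall_zero_iff.2 hsR⟩ v
      _ ≤ _ := by gcongr; exact le_max_right _ _
  · calc ‖v‖ ≤ (‖s‖ - ∑ i, ‖L i‖) * ‖v‖ :=
          le_mul_of_one_le_left (norm_nonneg v) (le_sub_iff_add_le.2 hsR)
      _ ≤ 1 * ‖delayCharOp L h s v‖ := by
          rw [one_mul]
          exact mul_norm_le_norm_delayCharOp L hh hs v
      _ ≤ _ := by gcongr; exact le_max_left _ _

/-- The defect `w'(t) - ∑ i, L i (w (t - h i))` with which `w` solves the delay equation. -/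
noncomputable def delayResidual (L : ι → E →L[ℂ] E) (h : ι → ℝ) (w : ℝ → E) (t : ℝ) : E :=
  deriv w t - ∑ i, L i (w (t - h i))

theorem deriv_eq_delayResidual_add (L : ι → E →L[ℂ] E) (h : ι → ℝ) (w : ℝ → E) (t : ℝ) :
    deriv w t = delayResidual L h w t + ∑ i, L i (w (t - h i)) :=
  (sub_add_cancel _ _).symm

theorem deriv_exp_neg_smul_add_smul (L : ι → E →L[ℂ] E) (h : ι → ℝ) {w : ℝ → E} {σ t : ℝ}
    (hw : DifferentiableAt ℝ w t) :
    deriv (fun t => Real.exp (-σ * t) • w t) t + σ • Real.exp (-σ * t) • w t =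
      Real.exp (-σ * t) • delayResidual L h w t +
        ∑ i, (Complex.exp (-(h i : ℂ) * σ) • L i)
          (Real.exp (-σ * (t - h i)) • w (t - h i)) := by
  have hexp : HasDerivAt (fun t => Real.exp (-σ * t)) (Real.exp (-σ * t) * -σ) t := by
    simpa using ((hasDerivAt_id t).const_mul (-σ)).exp
  have hterm : ∀ i, (Complex.exp (-(h i : ℂ) * σ) • L i)
      (Real.exp (-σ * (t - h i)) • w (t - h i)) = Real.exp (-σ * t) • L i (w (t - h i)) := by
    intro i
    rw [show Complex.exp (-(h i : ℂ) * σ) = (Real.exp (-h i * σ) : ℂ) by push_cast; rfl,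
      smul_apply, ContinuousLinearMap.map_smul_of_tower, Complex.coe_smul,
      smul_smul, ← Real.exp_add]
    ring_nf
  have hderiv : deriv (fun t => Real.exp (-σ * t) • w t) t =
      Real.exp (-σ * t) • deriv w t + (Real.exp (-σ * t) * -σ) • w t :=
    (hexp.smul hw.hasDerivAt).deriv
  rw [hderiv, Finset.sum_congr rfl fun i _ => hterm i, ← Finset.smul_sum,
    ← smul_add, ← deriv_eq_delayResidual_add]
  module

theorem fourier_exp_neg_smul_delayResidual [CompleteSpace E] (L : ι → E →L[ℂ] E) (h : ι → ℝ)
    {w : ℝ → E} (hw : Differentiable ℝ w) {σ : ℝ}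
    (hInt : Integrable fun t => Real.exp (-σ * t) • w t)
    (hres : Integrable fun t => Real.exp (-σ * t) • delayResidual L h w t) (ξ : ℝ) :
    𝓕 (fun t => Real.exp (-σ * t) • delayResidual L h w t) ξ =
      delayCharOp L h (σ + 2 * Real.pi * Complex.I * ξ)
        (𝓕 (fun t => Real.exp (-σ * t) • w t) ξ) := by
  set v : ℝ → E := fun t => Real.exp (-σ * t) • w t with hv
  have hdiff : Differentiable ℝ v := by fun_prop
  have hdelay : ∀ i, Integrable fun t => (Complex.exp (-(h i : ℂ) * σ) • L i) (v (t - h i)) :=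
    fun i => (Complex.exp (-(h i : ℂ) * σ) • L i).integrable_comp (hInt.comp_sub_right (h i))
  have hsum := integrable_finsetSum Finset.univ fun i _ => hdelay i
  have hode : ∀ t, deriv v t + σ • v t = Real.exp (-σ * t) • delayResidual L h w t +
      ∑ i, (Complex.exp (-(h i : ℂ) * σ) • L i) (v (t - h i)) :=
    fun t => deriv_exp_neg_smul_add_smul L h (hw t)
  have hsmul : Integrable fun t => ((σ : ℂ) • ContinuousLinearMap.id ℂ E) (v t) :=
    ((σ : ℂ) • ContinuousLinearMap.id ℂ E).integrable_comp hInt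
  have hderiv : Integrable (deriv v) := by
    refine ((hres.add hsum).sub hsmul).congr (.of_forall fun t => ?_)
    simpa using (eq_sub_of_add_eq (hode t)).symm
  have hF : 𝓕 (fun t => deriv v t + ((σ : ℂ) • ContinuousLinearMap.id ℂ E) (v t)) ξ =
      𝓕 (fun t => Real.exp (-σ * t) • delayResidual L h w t +
        ∑ i, (Complex.exp (-(h i : ℂ) * σ) • L i) (v (t - h i))) ξ := by
    congr! 2 with t
    simpa using hode t
  rw [fourier_fun_add_apply hderiv hsmul, fourier_fun_add_apply hres hsum,
    fourier_fun_sum_apply _ fun i _ => hdelay i, fourier_clm_comp_apply _ hInt,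
    Real.fourier_deriv hInt hdiff hderiv] at hF
  have hterm : ∀ i, 𝓕 (fun t => (Complex.exp (-(h i : ℂ) * σ) • L i) (v (t - h i))) ξ =
      Complex.exp (-(h i : ℂ) * (σ + 2 * Real.pi * Complex.I * ξ)) • L i (𝓕 v ξ) := fun i => by
    rw [fourier_clm_comp_apply _ (hInt.comp_sub_right _), fourier_comp_sub_apply, map_smul,
      smul_apply, smul_smul, ← Complex.exp_add, mul_add, add_comm]
  rw [eq_sub_of_add_eq hF.symm, delayCharOp_apply, Finset.sum_congr rfl fun i _ => hterm i,
    smul_apply, ContinuousLinearMap.id_apply, ← add_smul, add_comm]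

end Characteristic

theorem lpNorm_exp_neg_smul_le_of_resolvent_bound [InnerProductSpace ℂ E]
    [CompleteSpace E] (L : ι → E →L[ℂ] E) (h : ι → ℝ) {C : ℝ} (hC : 0 ≤ C)
    (hres : ∀ s : ℂ, 0 ≤ s.re → ∀ v, ‖v‖ ≤ C * ‖delayCharOp L h s v‖) {w : ℝ → E}
    (hw : Differentiable ℝ w) {σ : ℝ} (hσ : 0 ≤ σ)
    (hv₁ : Integrable fun t => Real.exp (-σ * t) • w t)
    (hv₂ : MemLp (fun t => Real.exp (-σ * t) • w t) 2)
    (hr₁ : Integrable fun t => Real.exp (-σ * t) • delayResidual L h w t)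
    (hr₂ : MemLp (fun t => Real.exp (-σ * t) • delayResidual L h w t) 2) :
    lpNorm (fun t => Real.exp (-σ * t) • w t) 2 volume ≤
      C * lpNorm (fun t => Real.exp (-σ * t) • delayResidual L h w t) 2 volume := by
  rw [← lpNorm_fourier_eq hv₁ hv₂, ← lpNorm_fourier_eq hr₁ hr₂]
  refine lpNorm_le_mul_lpNorm one_le_two (memLp_fourier hr₁ hr₂) hC fun ξ => ?_
  rw [fourier_exp_neg_smul_delayResidual L h hw hv₁ hr₁]
  exact hres _ (by simpa using hσ) _

section Majorant

variable [NormedSpace ℂ E]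

/-- The majorant `‖w t‖ + ∑ i, ‖L i‖ ‖w (t - h i)‖` of the present and delayed terms of the delay
equation. -/
noncomputable def delayMajorant (L : ι → E →L[ℂ] E) (h : ι → ℝ) (w : ℝ → E) (t : ℝ) : ℝ :=
  ‖w t‖ + ∑ i, ‖L i‖ * ‖w (t - h i)‖

variable (L : ι → E →L[ℂ] E) (h : ι → ℝ) {w : ℝ → E}

theorem delayMajorant_nonneg (w : ℝ → E) (t : ℝ) : 0 ≤ delayMajorant L h w t := by
  unfold delayMajorant
  positivity

theorem norm_sum_le_sum_mul (T : ι → E →L[ℂ] E) (v : ι → E) :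
    ‖∑ i, T i (v i)‖ ≤ ∑ i, ‖T i‖ * ‖v i‖ :=
  norm_sum_le_of_le _ fun i _ => (T i).le_opNorm (v i)

theorem memLp_delayMajorant {p : ENNReal} (hw : MemLp w p) : MemLp (delayMajorant L h w) p :=
  hw.norm.add (memLp_finsetSum _ fun i _ => (memLp_comp_sub_right hw (h i)).norm.const_mul ‖L i‖)

theorem lpNorm_delayMajorant_le {p : ENNReal} (hp : 1 ≤ p) (hw : MemLp w p) :
    lpNorm (delayMajorant L h w) p volume ≤ (1 + ∑ i, ‖L i‖) * lpNorm w p volume := by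
  have hterm : ∀ i, lpNorm (fun t => ‖L i‖ * ‖w (t - h i)‖) p volume ≤
      ‖L i‖ * lpNorm w p volume := fun i =>
    calc _ ≤ ‖L i‖ * lpNorm (fun t => w (t - h i)) p volume :=
          lpNorm_le_mul_lpNorm hp (memLp_comp_sub_right hw _) (norm_nonneg _) fun t => by simp
      _ = _ := congrArg _ (lpNorm_comp_measurePreserving p hw.1 (measurePreserving_sub_right _ _))
  calc lpNorm (delayMajorant L h w) p volume
      ≤ lpNorm (fun t => ‖w t‖) p volume +
          lpNorm (∑ i, fun t => ‖L i‖ * ‖w (t - h i)‖) p volume := by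
        convert lpNorm_add_le hw.norm hp using 2
        funext t
        simp [delayMajorant]
    _ ≤ lpNorm w p volume + ∑ i, ‖L i‖ * lpNorm w p volume := by
        rw [lpNorm_norm hw.1]
        gcongr
        exact (lpNorm_sum_le (fun i _ => (memLp_comp_sub_right hw _).norm.const_mul _) hp).trans
          (Finset.sum_le_sum fun i _ => hterm i)
    _ = _ := by rw [← Finset.sum_mul, one_add_mul]

theorem exp_neg_mul_delayMajorant_le (hh : ∀ i, 0 ≤ h i) {σ : ℝ} (hσ : 0 ≤ σ) (w : ℝ → E) (t : ℝ) :
    Real.exp (-σ * t) * delayMajorant L h w t ≤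
      delayMajorant L h (fun t => Real.exp (-σ * t) • w t) t := by
  simp only [delayMajorant, norm_smul, Real.norm_eq_abs, Real.abs_exp, mul_add, Finset.mul_sum]
  refine add_le_add_right (Finset.sum_le_sum fun i _ => ?_) _
  have hexp : Real.exp (-σ * t) ≤ Real.exp (-σ * (t - h i)) :=
    Real.exp_le_exp.2 (by nlinarith [mul_nonneg hσ (hh i)])
  rw [mul_left_comm]
  gcongr

theorem norm_deriv_exp_neg_smul_le (hh : ∀ i, 0 ≤ h i) {σ : ℝ} (hσ : 0 ≤ σ) {t : ℝ}
    (hw : DifferentiableAt ℝ w t) :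
    ‖deriv (fun t => Real.exp (-σ * t) • w t) t‖ ≤ ‖Real.exp (-σ * t) • delayResidual L h w t‖ +
      (σ + 1) * delayMajorant L h (fun t => Real.exp (-σ * t) • w t) t := by
  set v : ℝ → E := fun t => Real.exp (-σ * t) • w t
  have hterm : ∀ i, ‖Complex.exp (-(h i : ℂ) * σ) • L i‖ ≤ ‖L i‖ := fun i => by
    rw [norm_smul]
    exact mul_le_of_le_one_left (norm_nonneg _) (norm_exp_neg_mul_le_one (hh i) (by simpa using hσ))
  have hv_le : ‖v t‖ ≤ delayMajorant L h v t := le_add_of_nonneg_right (by positivity)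
  have hsum_le : ‖∑ i, (Complex.exp (-(h i : ℂ) * σ) • L i) (v (t - h i))‖ ≤
      delayMajorant L h v t :=
    (norm_sum_le_sum_mul _ _).trans <| (Finset.sum_le_sum fun i _ =>
      mul_le_mul_of_nonneg_right (hterm i) (norm_nonneg _)).trans
        (le_add_of_nonneg_left (norm_nonneg _))
  rw [eq_sub_of_add_eq (deriv_exp_neg_smul_add_smul L h hw)]
  refine (norm_sub_le _ _).trans ((add_le_add_left (norm_add_le _ _) _).trans ?_)
  rw [norm_smul σ, Real.norm_of_nonneg hσ]
  nlinarith

end Majorant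

section Absorption

theorem aestronglyMeasurable_delayResidual [NormedSpace ℂ E] [CompleteSpace E] (L : ι → E →L[ℂ] E)
    (h : ι → ℝ) {w : ℝ → E} (hw : Continuous w) :
    AEStronglyMeasurable (delayResidual L h w) volume :=
  (aestronglyMeasurable_deriv w _).sub (by fun_prop : Continuous fun t =>
    ∑ i, L i (w (t - h i))).aestronglyMeasurable

variable [InnerProductSpace ℂ E] [CompleteSpace E] (L : ι → E →L[ℂ] E) {h : ι → ℝ}

theorem norm_exp_neg_smul_le_mul_lpNorm_delayResidual
    (hh : ∀ i, 0 ≤ h i) {C : ℝ} (hC : 0 ≤ C)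
    (hres : ∀ s : ℂ, 0 ≤ s.re → ∀ v, ‖v‖ ≤ C * ‖delayCharOp L h s v‖)
    {w : ℝ → E} (hw : Differentiable ℝ w) {σ : ℝ} (hσ : 0 ≤ σ)
    (hv₁ : Integrable fun t => Real.exp (-σ * t) • w t)
    (hv₂ : MemLp (fun t => Real.exp (-σ * t) • w t) 2)
    (hr₁ : Integrable fun t => Real.exp (-σ * t) • delayResidual L h w t)
    (hr₂ : MemLp (fun t => Real.exp (-σ * t) • delayResidual L h w t) 2) (t : ℝ) :
    ‖Real.exp (-σ * t) • w t‖ ≤ (1 + C * (1 + (σ + 1) * (1 + ∑ i, ‖L i‖))) *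
      lpNorm (fun t => Real.exp (-σ * t) • delayResidual L h w t) 2 volume := by
  set v : ℝ → E := fun t => Real.exp (-σ * t) • w t
  set r : ℝ → E := fun t => Real.exp (-σ * t) • delayResidual L h w t
  have hM₂ : MemLp (delayMajorant L h v) 2 := memLp_delayMajorant L h hv₂
  have hderiv : ∀ t, ‖deriv v t‖ ≤ ‖r t‖ + (σ + 1) * ‖delayMajorant L h v t‖ := fun t => by
    rw [Real.norm_of_nonneg (delayMajorant_nonneg L h v t)]
    exact norm_deriv_exp_neg_smul_le L h hh hσ (hw t)
  have hderiv₂ : MemLp (deriv v) 2 :=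
    (hr₂.norm.add (hM₂.norm.const_mul (σ + 1))).mono' (aestronglyMeasurable_deriv v _)
      (.of_forall hderiv)
  have hderiv_le : lpNorm (deriv v) 2 volume ≤
      lpNorm r 2 volume + (σ + 1) * ((1 + ∑ i, ‖L i‖) * lpNorm v 2 volume) :=
    (lpNorm_le_lpNorm_add_mul_lpNorm one_le_two hr₂ hM₂ (by positivity) hderiv).trans <| by
      gcongr
      exact lpNorm_delayMajorant_le L h one_le_two hv₂
  let : InnerProductSpace ℝ E := InnerProductSpace.complexToReal
  calc ‖v t‖ ≤ lpNorm v 2 volume + lpNorm (deriv v) 2 volume :=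
        norm_le_lpNorm_add_lpNorm_deriv (by fun_prop) hv₂ hderiv₂ t
    _ ≤ lpNorm r 2 volume + (1 + (σ + 1) * (1 + ∑ i, ‖L i‖)) * lpNorm v 2 volume := by linarith
    _ ≤ lpNorm r 2 volume + (1 + (σ + 1) * (1 + ∑ i, ‖L i‖)) * (C * lpNorm r 2 volume) := by
        gcongr
        exact lpNorm_exp_neg_smul_le_of_resolvent_bound L h hC hres hw hσ hv₁ hv₂ hr₁ hr₂
    _ = _ := by ring

theorem norm_exp_neg_smul_le_of_norm_delayResidual_le
    (hh : ∀ i, 0 ≤ h i) {C : ℝ} (hC : 0 ≤ C)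
    (hres : ∀ s : ℂ, 0 ≤ s.re → ∀ v, ‖v‖ ≤ C * ‖delayCharOp L h s v‖)
    {w : ℝ → E} (hw : Differentiable ℝ w) {σ : ℝ} (hσ : 0 ≤ σ)
    (hv₁ : Integrable fun t => Real.exp (-σ * t) • w t)
    (hv₂ : MemLp (fun t => Real.exp (-σ * t) • w t) 2)
    {ε : ℝ} (hε : 0 ≤ ε)
    (hεC : 2 * C * ε * (1 + ∑ i, ‖L i‖) ≤ 1) {F : ℝ → ℝ} (hF₁ : Integrable F) (hF₂ : MemLp F 2)
    (hle : ∀ t, ‖Real.exp (-σ * t) • delayResidual L h w t‖ ≤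
      ‖F t‖ + ε * ‖delayMajorant L h (fun t => Real.exp (-σ * t) • w t) t‖) (t : ℝ) :
    ‖Real.exp (-σ * t) • w t‖ ≤
      (1 + C * (1 + (σ + 1) * (1 + ∑ i, ‖L i‖))) * (2 * lpNorm F 2 volume) := by
  set v : ℝ → E := fun t => Real.exp (-σ * t) • w t
  set r : ℝ → E := fun t => Real.exp (-σ * t) • delayResidual L h w t
  set B := ∑ i, ‖L i‖
  have hM₁ : Integrable (delayMajorant L h v) :=
    memLp_one_iff_integrable.1 (memLp_delayMajorant L h (memLp_one_iff_integrable.2 hv₁))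
  have hM₂ : MemLp (delayMajorant L h v) 2 := memLp_delayMajorant L h hv₂
  have hr_meas : AEStronglyMeasurable r volume :=
    (by fun_prop : Continuous fun t => Real.exp (-σ * t)).aestronglyMeasurable.smul
      (aestronglyMeasurable_delayResidual L h hw.continuous)
  have hr₁ : Integrable r := (hF₁.norm.add (hM₁.norm.const_mul ε)).mono' hr_meas (.of_forall hle)
  have hr₂ : MemLp r 2 := (hF₂.norm.add (hM₂.norm.const_mul ε)).mono' hr_meas (.of_forall hle)
  have habsorb : ε * lpNorm (delayMajorant L h v) 2 volume ≤ 1 / 2 * lpNorm r 2 volume := calc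
    _ ≤ ε * ((1 + B) * (C * lpNorm r 2 volume)) := by
      gcongr
      refine (lpNorm_delayMajorant_le L h one_le_two hv₂).trans ?_
      gcongr
      exact lpNorm_exp_neg_smul_le_of_resolvent_bound L h hC hres hw hσ hv₁ hv₂ hr₁ hr₂
    _ = (2 * C * ε * (1 + B)) / 2 * lpNorm r 2 volume := by ring
    _ ≤ _ := by gcongr; exact lpNorm_nonneg
  have hr_le : lpNorm r 2 volume ≤ 2 * lpNorm F 2 volume := by
    linarith [lpNorm_le_lpNorm_add_mul_lpNorm one_le_two hF₂ hM₂ hε hle]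
  exact (norm_exp_neg_smul_le_mul_lpNorm_delayResidual L hh hC hres hw hσ hv₁ hv₂ hr₁ hr₂ t).trans
    (by gcongr)

end Absorption

section Weight

/-- The weight `(e^{-ηt} + δ e^{ηt})⁻¹`: it varies at relative rate at most `η`, decays at infinity
for `δ > 0`, and increases to `e^{ηt}` as `δ → 0`. -/
noncomputable def slowWeight (η δ t : ℝ) : ℝ :=
  (Real.exp (-η * t) + δ * Real.exp (η * t))⁻¹

variable {η δ : ℝ}

theorem slowWeight_pos (η : ℝ) (hδ : 0 ≤ δ) (t : ℝ) : 0 < slowWeight η δ t := by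
  unfold slowWeight
  positivity

theorem slowWeight_le_exp (η : ℝ) (hδ : 0 ≤ δ) (t : ℝ) : slowWeight η δ t ≤ Real.exp (η * t) := by
  rw [slowWeight, ← inv_inv (Real.exp (η * t)), ← Real.exp_neg, ← neg_mul]
  gcongr
  exact le_add_of_nonneg_right (by positivity)

theorem slowWeight_le_inv_mul_exp_neg (η : ℝ) (hδ : 0 < δ) (t : ℝ) :
    slowWeight η δ t ≤ δ⁻¹ * Real.exp (-η * t) := by
  rw [slowWeight, neg_mul, Real.exp_neg, ← mul_inv]
  gcongr
  exact le_add_of_nonneg_left (by positivity)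

theorem tendsto_slowWeight (η t : ℝ) :
    Tendsto (fun δ => slowWeight η δ t) (nhdsWithin 0 (Set.Ioi 0)) (nhds (Real.exp (η * t))) := by
  have hcont : ContinuousAt (fun δ => slowWeight η δ t) 0 := by
    unfold slowWeight
    exact ContinuousAt.inv₀ (by fun_prop) (by positivity)
  have hzero : slowWeight η 0 t = Real.exp (η * t) := by
    simp [slowWeight, ← Real.exp_neg]
  exact hzero ▸ hcont.tendsto.mono_left nhdsWithin_le_nhds

theorem differentiable_slowWeight (η : ℝ) (hδ : 0 ≤ δ) : Differentiable ℝ (slowWeight η δ) :=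
  fun t => DifferentiableAt.inv (by fun_prop) (by positivity)

theorem abs_deriv_slowWeight_le (hη : 0 ≤ η) (hδ : 0 ≤ δ) (t : ℝ) :
    |deriv (slowWeight η δ) t| ≤ η * slowWeight η δ t := by
  have hexp : ∀ c : ℝ, HasDerivAt (fun t => Real.exp (c * t)) (Real.exp (c * t) * c) t :=
    fun c => by simpa using ((hasDerivAt_id t).const_mul c).exp
  set D := Real.exp (-η * t) + δ * Real.exp (η * t) with hD
  have hDpos : 0 < D := by positivity
  have hderiv : deriv (slowWeight η δ) t =
      -(Real.exp (-η * t) * -η + δ * (Real.exp (η * t) * η)) / D ^ 2 :=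
    (((hexp (-η)).add ((hexp η).const_mul δ)).inv hDpos.ne').deriv
  have hnum : |-(Real.exp (-η * t) * -η + δ * (Real.exp (η * t) * η))| ≤ η * D := by
    rw [abs_neg, abs_le]
    constructor <;> rw [hD] <;>
      nlinarith [mul_nonneg hη (Real.exp_pos (-η * t)).le,
        mul_nonneg (mul_nonneg hδ hη) (Real.exp_pos (η * t)).le]
  calc |deriv (slowWeight η δ) t| ≤ η * D / D ^ 2 := by
        rw [hderiv, abs_div, abs_of_pos (pow_pos hDpos 2)]
        gcongr
    _ = η * slowWeight η δ t := by
      rw [slowWeight, ← hD]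
      field_simp

theorem slowWeight_le_exp_mul_slowWeight (hη : 0 ≤ η) (hδ : 0 ≤ δ) {a s t : ℝ} (hst : |t - s| ≤ a) :
    slowWeight η δ t ≤ Real.exp (η * a) * slowWeight η δ s := by
  obtain ⟨h₁, h₂⟩ := abs_le.1 hst
  have hle : Real.exp (-η * s) + δ * Real.exp (η * s) ≤
      Real.exp (η * a) * (Real.exp (-η * t) + δ * Real.exp (η * t)) := by
    rw [mul_add, mul_left_comm, ← Real.exp_add, ← Real.exp_add]
    gcongr <;> nlinarith
  rw [slowWeight, slowWeight, ← div_eq_mul_inv, inv_eq_one_div, div_le_div_iff₀ (by positivity)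
    (by positivity), one_mul]
  exact hle

theorem abs_slowWeight_sub_le (hη : 0 ≤ η) (hδ : 0 ≤ δ) {a s t : ℝ} (hst : |t - s| ≤ a) :
    |slowWeight η δ t - slowWeight η δ s| ≤ (Real.exp (η * a) - 1) * slowWeight η δ s := by
  have hts := slowWeight_le_exp_mul_slowWeight hη hδ hst
  have hst' := slowWeight_le_exp_mul_slowWeight hη hδ (abs_sub_comm t s ▸ hst)
  have hexp : 1 ≤ Real.exp (η * a) := Real.one_le_exp (mul_nonneg hη ((abs_nonneg _).trans hst))
  rw [abs_le]
  constructor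
  · nlinarith [mul_le_mul_of_nonneg_left hst' (sub_nonneg.2 hexp)]
  · linarith

end Weight

section ProductRule

variable [NormedSpace ℂ E] (L : ι → E →L[ℂ] E) (h : ι → ℝ)

theorem delayResidual_smul {ψ : ℝ → ℝ} {w : ℝ → E} {t : ℝ} (hψ : DifferentiableAt ℝ ψ t)
    (hw : DifferentiableAt ℝ w t) :
    delayResidual L h (fun t => ψ t • w t) t = ψ t • delayResidual L h w t +
      (deriv ψ t • w t + ∑ i, (ψ t - ψ (t - h i)) • L i (w (t - h i))) := by
  have hderiv : deriv (fun t => ψ t • w t) t = ψ t • deriv w t + deriv ψ t • w t :=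
    (hψ.hasDerivAt.smul hw.hasDerivAt).deriv
  simp only [delayResidual, hderiv, ContinuousLinearMap.map_smul_of_tower, sub_smul,
    Finset.sum_sub_distrib, smul_sub, Finset.smul_sum]
  abel

theorem norm_delayResidual_smul_le {ψ : ℝ → ℝ} {w : ℝ → E} {t ε : ℝ} (hψ : DifferentiableAt ℝ ψ t)
    (hw : DifferentiableAt ℝ w t) (hderiv : |deriv ψ t| ≤ ε * ‖ψ t‖)
    (hsub : ∀ i, |ψ t - ψ (t - h i)| ≤ ε * ‖ψ (t - h i)‖) :
    ‖delayResidual L h (fun t => ψ t • w t) t‖ ≤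
      ‖ψ t‖ * ‖delayResidual L h w t‖ + ε * delayMajorant L h (fun t => ψ t • w t) t := by
  rw [delayResidual_smul L h hψ hw, delayMajorant, mul_add, Finset.mul_sum]
  refine norm_add_le_of_le (norm_smul_le _ _) (norm_add_le_of_le ?_ (norm_sum_le_of_le _ ?_))
  · rw [norm_smul, norm_smul, ← mul_assoc]
    exact mul_le_mul_of_nonneg_right hderiv (norm_nonneg _)
  · intro i _
    calc ‖(ψ t - ψ (t - h i)) • L i (w (t - h i))‖
        ≤ (ε * ‖ψ (t - h i)‖) * (‖L i‖ * ‖w (t - h i)‖) := by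
          rw [norm_smul]
          exact mul_le_mul (hsub i) ((L i).le_opNorm _) (norm_nonneg _)
            ((abs_nonneg _).trans (hsub i))
      _ = ε * (‖L i‖ * ‖ψ (t - h i) • w (t - h i)‖) := by rw [norm_smul]; ring

end ProductRule

section Forced

variable [InnerProductSpace ℂ E] {L : ι → E →L[ℂ] E} {h : ι → ℝ} {σ η δ K : ℝ} {z : ℝ → E}

theorem memLp_exp_neg_smul_slowWeight_smul (hη : 0 < η) (hδ : 0 < δ) (hz : Continuous z)
    (hzero : ∀ t ≤ 0, z t = 0) (hgrowth : ∀ t > 0, ‖z t‖ ≤ K * Real.exp (σ * t)) {p : ENNReal}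
    (hp₀ : p ≠ 0) (hp : p ≠ ⊤) :
    MemLp (fun t => Real.exp (-σ * t) • slowWeight η δ t • z t) p := by
  have hψ : Continuous (slowWeight η δ) := (differentiable_slowWeight η hδ.le).continuous
  refine memLp_of_norm_le_exp_neg (A := δ⁻¹ * K) (by fun_prop) hη
    (fun t ht => by rw [hzero t ht, smul_zero, smul_zero]) (fun t ht => ?_) hp₀ hp
  rw [norm_smul, norm_smul, Real.norm_eq_abs, Real.abs_exp,
    Real.norm_of_nonneg (slowWeight_pos η hδ.le t).le]
  calc Real.exp (-σ * t) * (slowWeight η δ t * ‖z t‖)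
      ≤ Real.exp (-σ * t) * (δ⁻¹ * Real.exp (-η * t) * (K * Real.exp (σ * t))) := by
        gcongr
        exacts [slowWeight_le_inv_mul_exp_neg η hδ t, hgrowth t ht]
    _ = δ⁻¹ * K * Real.exp (-η * t) * (Real.exp (-σ * t) * Real.exp (σ * t)) := by ring
    _ = δ⁻¹ * K * Real.exp (-η * t) := by
      rw [← Real.exp_add, ← add_mul, neg_add_cancel, zero_mul, Real.exp_zero, mul_one]

theorem exp_neg_mul_slowWeight_mul_le {b r t x : ℝ} (hη : 0 ≤ η) (hδ : 0 ≤ δ) (hσ : 0 ≤ σ)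
    (hx₀ : 0 ≤ x) (hx : x ≤ b * Set.indicator (Set.Icc 0 r) 1 t) :
    Real.exp (-σ * t) * (slowWeight η δ t * x) ≤
      Real.exp (η * r) * b * Set.indicator (Set.Icc 0 r) 1 t := by
  by_cases ht : t ∈ Set.Icc 0 r
  · simp only [Set.indicator_of_mem ht, Pi.one_apply, mul_one] at hx ⊢
    have hexp : Real.exp (-σ * t) ≤ 1 := Real.exp_le_one_iff.2 (by nlinarith [ht.1])
    have hψ : slowWeight η δ t ≤ Real.exp (η * r) :=
      (slowWeight_le_exp η hδ t).trans (by gcongr; exact ht.2)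
    calc Real.exp (-σ * t) * (slowWeight η δ t * x) ≤ 1 * (Real.exp (η * r) * b) := by
          have := (slowWeight_pos η hδ t).le
          gcongr
      _ = _ := one_mul _
  · simp only [Set.indicator_of_notMem ht, mul_zero] at hx ⊢
    rw [le_antisymm hx hx₀, mul_zero, mul_zero]

theorem norm_delayResidual_slowWeight_smul_le {ε H b r : ℝ} (hh : ∀ i, 0 ≤ h i) (hH : ∀ i, h i ≤ H)
    (hη : 0 ≤ η) (hδ : 0 ≤ δ) (hηε : η ≤ ε) (hηH : Real.exp (η * H) - 1 ≤ ε) (hσ : 0 ≤ σ)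
    (hz : Differentiable ℝ z)
    (hres : ∀ t, ‖delayResidual L h z t‖ ≤ b * Set.indicator (Set.Icc 0 r) 1 t) (t : ℝ) :
    ‖Real.exp (-σ * t) • delayResidual L h (fun t => slowWeight η δ t • z t) t‖ ≤
      Real.exp (η * r) * b * Set.indicator (Set.Icc 0 r) 1 t +
        ε * delayMajorant L h (fun t => Real.exp (-σ * t) • slowWeight η δ t • z t) t := by
  have hψ := fun t => slowWeight_pos η hδ t
  have hε : 0 ≤ ε := hη.trans hηε
  have hprod := norm_delayResidual_smul_le L h (ε := ε) (differentiable_slowWeight η hδ t) (hz t)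
    ((abs_deriv_slowWeight_le hη hδ t).trans (by
      rw [Real.norm_of_nonneg (hψ t).le]
      exact mul_le_mul_of_nonneg_right hηε (hψ t).le)) fun i =>
    (abs_slowWeight_sub_le hη hδ (a := H) (by simpa [abs_of_nonneg (hh i)] using hH i)).trans (by
      rw [Real.norm_of_nonneg (hψ _).le]
      exact mul_le_mul_of_nonneg_right hηH (hψ _).le)
  rw [Real.norm_of_nonneg (hψ t).le] at hprod
  calc _ ≤ Real.exp (-σ * t) * (slowWeight η δ t * ‖delayResidual L h z t‖ +
          ε * delayMajorant L h (fun t => slowWeight η δ t • z t) t) := by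
        rw [norm_smul, Real.norm_eq_abs, Real.abs_exp]
        gcongr
    _ = Real.exp (-σ * t) * (slowWeight η δ t * ‖delayResidual L h z t‖) +
          ε * (Real.exp (-σ * t) * delayMajorant L h (fun t => slowWeight η δ t • z t) t) := by
        ring
    _ ≤ _ := add_le_add (exp_neg_mul_slowWeight_mul_le hη hδ hσ (norm_nonneg _) (hres t))
        (mul_le_mul_of_nonneg_left (exp_neg_mul_delayMajorant_le L h hh hσ _ t) hε)

variable [CompleteSpace E] {C ε H b r : ℝ}

theorem exp_neg_mul_slowWeight_mul_norm_le_of_forced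
    (hh : ∀ i, 0 ≤ h i) (hH : ∀ i, h i ≤ H) (hC : 0 ≤ C)
    (hres : ∀ s : ℂ, 0 ≤ s.re → ∀ v, ‖v‖ ≤ C * ‖delayCharOp L h s v‖)
    (hεC : 2 * C * ε * (1 + ∑ i, ‖L i‖) ≤ 1) (hη : 0 < η) (hηε : η ≤ ε)
    (hηH : Real.exp (η * H) - 1 ≤ ε) (hσ : 0 ≤ σ) (hz : Differentiable ℝ z)
    (hzero : ∀ t ≤ 0, z t = 0) (hgrowth : ∀ t > 0, ‖z t‖ ≤ K * Real.exp (σ * t)) (hb : 0 ≤ b)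
    (hforce : ∀ t, ‖delayResidual L h z t‖ ≤ b * Set.indicator (Set.Icc 0 r) 1 t)
    (hδ : 0 < δ) (t : ℝ) :
    Real.exp (-σ * t) * (slowWeight η δ t * ‖z t‖) ≤
      (1 + C * (1 + (σ + 1) * (1 + ∑ i, ‖L i‖))) * (2 * (Real.exp (η * r) * b *
        lpNorm (Set.indicator (Set.Icc 0 r) (1 : ℝ → ℝ)) 2 volume)) := by
  set F : ℝ → ℝ := (Real.exp (η * r) * b) • Set.indicator (Set.Icc 0 r) 1 with hF
  have hF_mem : ∀ p : ENNReal, MemLp F p := fun p =>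
    (memLp_indicator_const p measurableSet_Icc (1 : ℝ) (.inr (by simp))).const_smul _
  have hF_norm : Real.exp (η * r) * b *
      lpNorm (Set.indicator (Set.Icc 0 r) (1 : ℝ → ℝ)) 2 volume = lpNorm F 2 volume := by
    rw [hF, lpNorm_const_smul, coe_nnnorm, Real.norm_of_nonneg (by positivity)]
  have hmem := fun {p : ENNReal} => memLp_exp_neg_smul_slowWeight_smul (p := p) hη hδ
    hz.continuous hzero hgrowth
  have hle := norm_exp_neg_smul_le_of_norm_delayResidual_le L hh hC hres
    ((differentiable_slowWeight η hδ.le).smul hz) hσ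
    (memLp_one_iff_integrable.1 (hmem one_ne_zero ENNReal.one_ne_top))
    (hmem two_ne_zero ENNReal.ofNat_ne_top) (hη.le.trans hηε) hεC
    (memLp_one_iff_integrable.1 (hF_mem 1)) (hF_mem 2) (fun t => ?_) t
  · rw [hF_norm]
    simpa [norm_smul, abs_of_pos (slowWeight_pos η hδ.le t)] using hle
  · rw [Real.norm_of_nonneg (delayMajorant_nonneg _ _ _ _)]
    refine (norm_delayResidual_slowWeight_smul_le hh hH hη.le hδ.le hηε hηH hσ hz hforce t).trans ?_
    exact add_le_add_left (le_abs_self _) _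

theorem norm_le_mul_exp_of_forced
    (hh : ∀ i, 0 ≤ h i) (hH : ∀ i, h i ≤ H) (hC : 0 ≤ C)
    (hres : ∀ s : ℂ, 0 ≤ s.re → ∀ v, ‖v‖ ≤ C * ‖delayCharOp L h s v‖)
    (hεC : 2 * C * ε * (1 + ∑ i, ‖L i‖) ≤ 1) (hη : 0 < η) (hηε : η ≤ ε)
    (hηH : Real.exp (η * H) - 1 ≤ ε) (hσ : 0 ≤ σ) (hz : Differentiable ℝ z)
    (hzero : ∀ t ≤ 0, z t = 0) (hgrowth : ∀ t > 0, ‖z t‖ ≤ K * Real.exp (σ * t)) (hb : 0 ≤ b)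
    (hforce : ∀ t, ‖delayResidual L h z t‖ ≤ b * Set.indicator (Set.Icc 0 r) 1 t)
    (t : ℝ) :
    ‖z t‖ ≤ (1 + C * (1 + (σ + 1) * (1 + ∑ i, ‖L i‖))) * (2 * (Real.exp (η * r) * b *
      lpNorm (Set.indicator (Set.Icc 0 r) (1 : ℝ → ℝ)) 2 volume)) * Real.exp ((σ - η) * t) := by
  have hlim : Tendsto (fun δ => Real.exp (-σ * t) * (slowWeight η δ t * ‖z t‖))
      (nhdsWithin 0 (Set.Ioi 0)) (nhds (Real.exp (-σ * t) * (Real.exp (η * t) * ‖z t‖))) :=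
    ((tendsto_slowWeight η t).mul_const _).const_mul _
  have hle := le_of_tendsto hlim <| eventually_nhdsWithin_of_forall fun δ hδ =>
    exp_neg_mul_slowWeight_mul_norm_le_of_forced hh hH hC hres hεC hη hηε hηH hσ hz hzero hgrowth
      hb hforce hδ t
  have hsplit : Real.exp (-σ * t) * (Real.exp (η * t) * ‖z t‖) =
      ‖z t‖ / Real.exp ((σ - η) * t) := by
    rw [← mul_assoc, ← Real.exp_add, div_eq_inv_mul, ← Real.exp_neg]
    ring_nf
  rwa [hsplit, div_le_iff₀ (Real.exp_pos _)] at hle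

end Forced

section Solutions

variable [NormedSpace ℂ E]

/-- `y` solves the delay equation `y'(t) = ∑ i, L i (y (t - h i))` for `t > 0`, with a continuous
history on `[-H, 0]`; values of `y` before `-H` are irrelevant. -/
structure IsDelaySolution (L : ι → E →L[ℂ] E) (h : ι → ℝ) (H : ℝ) (y : ℝ → E) : Prop where
  continuousOn : ContinuousOn y (Set.Ici (-H))
  hasDerivAt : ∀ t > 0, HasDerivAt y (∑ i, L i (y (t - h i))) t

/-- Solutions of the delay equation grow at exponential rate at most `σ`, uniformly with respect to
the size of their history. -/
def HasGrowthBound (L : ι → E →L[ℂ] E) (h : ι → ℝ) (H σ : ℝ) : Prop :=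
  ∃ K > 0, ∀ y, IsDelaySolution L h H y → ∀ N, (∀ τ ∈ Set.Icc (-H) 0, ‖y τ‖ ≤ N) →
    ∀ t ≥ 0, ‖y t‖ ≤ K * Real.exp (σ * t) * N

variable {L : ι → E →L[ℂ] E} {h : ι → ℝ} {H : ℝ} {y : ℝ → E}

theorem IsDelaySolution.delayResidual_eq_zero (hy : IsDelaySolution L h H y) {t : ℝ} (ht : 0 < t) :
    delayResidual L h y t = 0 := by
  rw [delayResidual, (hy.hasDerivAt t ht).deriv, sub_self]

theorem IsDelaySolution.norm_le_of_norm_le_exp (hy : IsDelaySolution L h H y) (hh : ∀ i, 0 ≤ h i)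
    (hH : ∀ i, h i ≤ H) (hH₀ : 0 ≤ H) {β m T : ℝ} (hβ : 0 < β) (hm : 0 ≤ m) (hT : 0 ≤ T)
    (hle : ∀ s ∈ Set.Icc (-H) T, ‖y s‖ ≤ m * Real.exp (β * s)) :
    ‖y T‖ ≤ (‖y 0‖ + (∑ i, ‖L i‖) * m / β) * Real.exp (β * T) := by
  have hderiv : ∀ s ∈ Set.Ioo 0 T, ‖deriv y s‖ ≤ (∑ i, ‖L i‖) * m * Real.exp (β * s) := by
    intro s hs
    rw [(hy.hasDerivAt s hs.1).deriv, mul_assoc, Finset.sum_mul]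
    refine norm_sum_le_of_le _ fun i _ => (L i).le_of_opNorm_le_of_le le_rfl ?_
    refine (hle _ ⟨by linarith [hH i, hs.1], by linarith [hh i, hs.2]⟩).trans ?_
    gcongr
    linarith [hh i]
  have hInt : ∫ s in (0 : ℝ)..T, (∑ i, ‖L i‖) * m * Real.exp (β * s) =
      (∑ i, ‖L i‖) * m / β * (Real.exp (β * T) - 1) := by
    rw [intervalIntegral.integral_const_mul, intervalIntegral.integral_comp_mul_left _ hβ.ne',
      integral_exp, mul_zero, Real.exp_zero, smul_eq_mul]
    ring
  have hsub := norm_sub_le_integral_of_norm_deriv_le_of_le hT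
    (hy.continuousOn.mono fun s hs => (neg_nonpos.2 hH₀).trans hs.1)
    (fun s hs => (hy.hasDerivAt s hs.1).differentiableAt.differentiableWithinAt)
    (.of_forall hderiv)
    ((by fun_prop : Continuous fun s => (∑ i, ‖L i‖) * m * Real.exp (β * s)).intervalIntegrable
      _ _)
  have hconst : 0 ≤ (∑ i, ‖L i‖) * m / β := by positivity
  have hexp : ‖y 0‖ ≤ ‖y 0‖ * Real.exp (β * T) :=
    le_mul_of_one_le_right (norm_nonneg _) (Real.one_le_exp (by positivity))
  linarith [norm_le_norm_add_norm_sub' (y T) (y 0)]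

theorem hasGrowthBound_two_mul_add_one (hh : ∀ i, 0 ≤ h i) (hH : ∀ i, h i ≤ H) (hH₀ : 0 ≤ H) :
    HasGrowthBound L h H (2 * ∑ i, ‖L i‖ + 1) := by
  set B := ∑ i, ‖L i‖
  have hB : 0 ≤ B := by positivity
  set β := 2 * B + 1
  have hβ : 0 < β := by positivity
  refine ⟨max 2 (Real.exp (β * H)), by positivity, fun y hy N hN T hT => ?_⟩
  obtain ⟨t₀, ht₀, hmax⟩ := isCompact_Icc.exists_isMaxOn (f := fun t => ‖y t‖ * Real.exp (-(β * t)))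
    ⟨T, (neg_nonpos.2 hH₀).trans hT, le_rfl⟩
    ((hy.continuousOn.mono Set.Icc_subset_Ici_self).norm.mul (by fun_prop))
  set m := ‖y t₀‖ * Real.exp (-(β * t₀))
  have hle : ∀ s ∈ Set.Icc (-H) T, ‖y s‖ ≤ m * Real.exp (β * s) := fun s hs => by
    have hs' : ‖y s‖ * Real.exp (-(β * s)) ≤ m := hmax hs
    rwa [Real.exp_neg, ← div_eq_mul_inv, div_le_iff₀ (Real.exp_pos _)] at hs'
  have hN₀ : ‖y 0‖ ≤ N := hN 0 ⟨neg_nonpos.2 hH₀, le_rfl⟩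
  have hbound : m ≤ max 2 (Real.exp (β * H)) * N := by
    rcases le_or_gt t₀ 0 with hneg | hpos
    · calc m ≤ N * Real.exp (β * H) := by
            refine mul_le_mul (hN t₀ ⟨ht₀.1, hneg⟩) (Real.exp_le_exp.2 ?_) (by positivity)
              ((norm_nonneg _).trans hN₀)
            nlinarith [ht₀.1]
        _ ≤ _ := by
          rw [mul_comm]
          gcongr
          exacts [(norm_nonneg _).trans hN₀, le_max_right _ _]
    · have hsol := hy.norm_le_of_norm_le_exp hh hH hH₀ hβ (by positivity : 0 ≤ m) hpos.le
        fun s hs => hle s ⟨hs.1, hs.2.trans ht₀.2⟩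
      have hhalf : B * m / β ≤ m / 2 := by
        rw [div_le_div_iff₀ hβ two_pos]
        nlinarith [(by positivity : 0 ≤ m)]
      rw [← div_le_iff₀ (Real.exp_pos _), div_eq_mul_inv, ← Real.exp_neg] at hsol
      nlinarith [le_max_left 2 (Real.exp (β * H)), (norm_nonneg _).trans hN₀]
  calc ‖y T‖ ≤ m * Real.exp (β * T) := hle T ⟨(neg_nonpos.2 hH₀).trans hT, le_rfl⟩
    _ ≤ max 2 (Real.exp (β * H)) * N * Real.exp (β * T) := by gcongr
    _ = _ := by ring

theorem HasGrowthBound.exists_forall_Icc {σ : ℝ} (hgrowth : HasGrowthBound L h H σ) (hH : 0 ≤ H)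
    (hσ : 0 ≤ σ) (T : ℝ) :
    ∃ K > 0, ∀ y, IsDelaySolution L h H y → ∀ N, (∀ τ ∈ Set.Icc (-H) 0, ‖y τ‖ ≤ N) →
      ∀ t ∈ Set.Icc (-H) T, ‖y t‖ ≤ K * N := by
  obtain ⟨K, hK, hbound⟩ := hgrowth
  refine ⟨1 + K * Real.exp (σ * T), by positivity, fun y hy N hN t ht => ?_⟩
  have hN₀ : 0 ≤ N := (norm_nonneg _).trans (hN 0 ⟨neg_nonpos.2 hH, le_rfl⟩)
  rw [add_mul, one_mul]
  rcases le_or_gt t 0 with hneg | hpos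
  · exact (hN t ⟨ht.1, hneg⟩).trans (le_add_of_nonneg_right (by positivity))
  · refine (hbound y hy N hN t hpos.le).trans (le_add_of_nonneg_of_le hN₀ ?_)
    gcongr
    exact ht.2

end Solutions

section Cutoff

/-- A smooth cutoff that vanishes up to time `1` and equals `1` from time `2` on; it turns a
solution on a half-line into a forced solution on `ℝ` with zero history. -/
noncomputable def timeCutoff (t : ℝ) : ℝ :=
  Real.smoothTransition (t - 1)

theorem contDiff_timeCutoff : ContDiff ℝ 1 timeCutoff :=
  Real.smoothTransition.contDiff.comp (contDiff_id.sub contDiff_const)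

theorem timeCutoff_of_le_one {t : ℝ} (ht : t ≤ 1) : timeCutoff t = 0 :=
  Real.smoothTransition.zero_of_nonpos (sub_nonpos.2 ht)

theorem timeCutoff_of_two_le {t : ℝ} (ht : 2 ≤ t) : timeCutoff t = 1 :=
  Real.smoothTransition.one_of_one_le (by linarith)

theorem abs_timeCutoff_sub_le_one (s t : ℝ) : |timeCutoff s - timeCutoff t| ≤ 1 :=
  abs_sub_le_of_nonneg_of_le (Real.smoothTransition.nonneg _) (Real.smoothTransition.le_one _)
    (Real.smoothTransition.nonneg _) (Real.smoothTransition.le_one _)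

variable [NormedSpace ℂ E] {L : ι → E →L[ℂ] E} {h : ι → ℝ} {H : ℝ} {y : ℝ → E}

theorem norm_timeCutoff_smul_le (t : ℝ) (v : E) : ‖timeCutoff t • v‖ ≤ ‖v‖ := by
  rw [norm_smul, timeCutoff, Real.norm_of_nonneg (Real.smoothTransition.nonneg _)]
  exact mul_le_of_le_one_left (norm_nonneg v) (Real.smoothTransition.le_one _)

theorem timeCutoff_smul_eventuallyEq_zero (y : ℝ → E) {t : ℝ} (ht : t < 1) :
    (fun s => timeCutoff s • y s) =ᶠ[nhds t] fun _ => 0 := by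
  filter_upwards [eventually_lt_nhds ht] with s hs
  rw [timeCutoff_of_le_one hs.le, zero_smul]

theorem IsDelaySolution.differentiable_timeCutoff_smul (hy : IsDelaySolution L h H y) :
    Differentiable ℝ fun t => timeCutoff t • y t := by
  intro t
  rcases lt_or_ge t 1 with ht | ht
  · exact (differentiableAt_const 0).congr_of_eventuallyEq (timeCutoff_smul_eventuallyEq_zero y ht)
  · exact (contDiff_timeCutoff.differentiable one_ne_zero t).smul
      (hy.hasDerivAt t (one_pos.trans_le ht)).differentiableAt

theorem delayResidual_timeCutoff_smul_of_lt_one (hh : ∀ i, 0 ≤ h i) {t : ℝ} (ht : t < 1) :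
    delayResidual L h (fun s => timeCutoff s • y s) t = 0 := by
  rw [delayResidual, (timeCutoff_smul_eventuallyEq_zero y ht).deriv_eq, deriv_const, zero_sub,
    neg_eq_zero]
  refine Finset.sum_eq_zero fun i _ => ?_
  rw [timeCutoff_of_le_one (by linarith [hh i]), zero_smul, map_zero]

theorem IsDelaySolution.delayResidual_timeCutoff_smul_of_two_add_lt (hy : IsDelaySolution L h H y)
    (hH : ∀ i, h i ≤ H) (hH₀ : 0 ≤ H) {t : ℝ} (ht : 2 + H < t) :
    delayResidual L h (fun s => timeCutoff s • y s) t = 0 := by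
  have heq : (fun s => timeCutoff s • y s) =ᶠ[nhds t] y := by
    filter_upwards [eventually_gt_nhds ((le_add_of_nonneg_right hH₀).trans_lt ht)] with s hs
    rw [timeCutoff_of_two_le hs.le, one_smul]
  rw [← hy.delayResidual_eq_zero (by linarith : 0 < t), delayResidual, delayResidual, heq.deriv_eq]
  congr 1
  refine Finset.sum_congr rfl fun i _ => ?_
  rw [timeCutoff_of_two_le (by linarith [hH i]), one_smul]

theorem IsDelaySolution.norm_delayResidual_timeCutoff_smul_le (hy : IsDelaySolution L h H y)
    (hh : ∀ i, 0 ≤ h i) (hH : ∀ i, h i ≤ H) (hH₀ : 0 ≤ H) {X Y t : ℝ} (ht : 0 < t)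
    (hX : ‖deriv timeCutoff t‖ ≤ X) (hY : ∀ s ∈ Set.Icc (-H) t, ‖y s‖ ≤ Y) :
    ‖delayResidual L h (fun s => timeCutoff s • y s) t‖ ≤ (X + ∑ i, ‖L i‖) * Y := by
  rw [delayResidual_smul L h (contDiff_timeCutoff.differentiable one_ne_zero t)
    (hy.hasDerivAt t ht).differentiableAt, hy.delayResidual_eq_zero ht, smul_zero, zero_add,
    add_mul, Finset.sum_mul]
  refine norm_add_le_of_le ?_ (norm_sum_le_of_le _ fun i _ => ?_)
  · rw [norm_smul]
    exact mul_le_mul hX (hY t ⟨by linarith, le_rfl⟩) (norm_nonneg _) ((norm_nonneg _).trans hX)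
  · rw [norm_smul]
    exact (mul_le_of_le_one_left (norm_nonneg _) (abs_timeCutoff_sub_le_one _ _)).trans
      ((L i).le_of_opNorm_le_of_le le_rfl (hY _ ⟨by linarith [hH i], by linarith [hh i]⟩))

theorem HasGrowthBound.exists_norm_delayResidual_timeCutoff_smul_le {σ : ℝ}
    (hgrowth : HasGrowthBound L h H σ) (hh : ∀ i, 0 ≤ h i) (hH : ∀ i, h i ≤ H) (hH₀ : 0 ≤ H)
    (hσ : 0 ≤ σ) :
    ∃ D ≥ 0, ∀ y, IsDelaySolution L h H y → ∀ N, (∀ τ ∈ Set.Icc (-H) 0, ‖y τ‖ ≤ N) → ∀ t,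
      ‖delayResidual L h (fun s => timeCutoff s • y s) t‖ ≤
        D * N * Set.indicator (Set.Icc 0 (2 + H)) 1 t := by
  obtain ⟨K, hK, hbound⟩ := hgrowth.exists_forall_Icc hH₀ hσ (2 + H)
  obtain ⟨X, hX⟩ := isCompact_Icc.exists_bound_of_continuousOn (s := Set.Icc 0 (2 + H))
    (contDiff_timeCutoff.continuous_deriv le_rfl).continuousOn
  have hX₀ : 0 ≤ X := (norm_nonneg _).trans (hX 0 ⟨le_rfl, by positivity⟩)
  refine ⟨(X + ∑ i, ‖L i‖) * K, by positivity, fun y hy N hN t => ?_⟩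
  have hN₀ : 0 ≤ N := (norm_nonneg _).trans (hN 0 ⟨neg_nonpos.2 hH₀, le_rfl⟩)
  have hrhs : 0 ≤ (X + ∑ i, ‖L i‖) * K * N * Set.indicator (Set.Icc 0 (2 + H)) 1 t :=
    mul_nonneg (by positivity) (Set.indicator_nonneg (fun _ _ => zero_le_one) t)
  rcases lt_or_ge t 1 with hlt | hge
  · rwa [delayResidual_timeCutoff_smul_of_lt_one hh hlt, norm_zero]
  rcases lt_or_ge (2 + H) t with hgt | hle
  · rwa [hy.delayResidual_timeCutoff_smul_of_two_add_lt hH hH₀ hgt, norm_zero]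
  have ht : t ∈ Set.Icc 0 (2 + H) := ⟨zero_le_one.trans hge, hle⟩
  rw [Set.indicator_of_mem ht, Pi.one_apply, mul_one, mul_assoc]
  exact hy.norm_delayResidual_timeCutoff_smul_le hh hH hH₀ (one_pos.trans_le hge) (hX t ht)
    fun s hs => hbound y hy N hN s ⟨hs.1, hs.2.trans hle⟩

end Cutoff

section Descent

variable [InnerProductSpace ℂ E] [CompleteSpace E] {L : ι → E →L[ℂ] E} {h : ι → ℝ} {H : ℝ}

theorem HasGrowthBound.sub {C ε η σ : ℝ} (hgrowth : HasGrowthBound L h H σ) (hh : ∀ i, 0 ≤ h i)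
    (hH : ∀ i, h i ≤ H) (hH₀ : 0 ≤ H) (hC : 0 ≤ C)
    (hres : ∀ s : ℂ, 0 ≤ s.re → ∀ v, ‖v‖ ≤ C * ‖delayCharOp L h s v‖)
    (hεC : 2 * C * ε * (1 + ∑ i, ‖L i‖) ≤ 1) (hη : 0 < η) (hηε : η ≤ ε)
    (hηH : Real.exp (η * H) - 1 ≤ ε) (hσ : 0 ≤ σ) : HasGrowthBound L h H (σ - η) := by
  obtain ⟨D, hD, hforce⟩ :=
    hgrowth.exists_norm_delayResidual_timeCutoff_smul_le hh hH hH₀ hσ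
  obtain ⟨K, hK, hbound⟩ := hgrowth
  set G := (1 + C * (1 + (σ + 1) * (1 + ∑ i, ‖L i‖))) * (2 * (Real.exp (η * (2 + H)) * D *
    lpNorm (Set.indicator (Set.Icc 0 (2 + H)) (1 : ℝ → ℝ)) 2 volume)) with hG
  have hG₀ : 0 ≤ G := mul_nonneg (by positivity)
    (mul_nonneg zero_le_two (mul_nonneg (by positivity) lpNorm_nonneg))
  refine ⟨K * Real.exp (2 * η) + G, by positivity, fun y hy N hN t ht => ?_⟩
  have hN₀ : 0 ≤ N := (norm_nonneg _).trans (hN 0 ⟨neg_nonpos.2 hH₀, le_rfl⟩)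
  rw [add_mul, add_mul]
  rcases le_or_gt t 2 with ht2 | ht2
  · refine le_add_of_le_of_nonneg ((hbound y hy N hN t ht).trans ?_) (by positivity)
    rw [mul_assoc K (Real.exp (2 * η)), ← Real.exp_add]
    gcongr
    nlinarith
  · refine le_add_of_nonneg_of_le (by positivity) ?_
    have hcut := norm_le_mul_exp_of_forced hh hH hC hres hεC hη hηε hηH hσ
      hy.differentiable_timeCutoff_smul
      (fun s hs => by rw [timeCutoff_of_le_one (hs.trans zero_le_one), zero_smul])
      (K := K * N) (fun s hs => (norm_timeCutoff_smul_le s _).trans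
        ((hbound y hy N hN s hs.le).trans_eq (by ring)))
      (mul_nonneg hD hN₀) (hforce y hy N hN) t
    rw [timeCutoff_of_two_le ht2.le, one_smul] at hcut
    exact hcut.trans_eq (by rw [hG]; ring)

theorem exists_pos_le_and_exp_mul_sub_one_le {ε : ℝ} (hε : 0 < ε) (H : ℝ) :
    ∃ η > 0, η ≤ ε ∧ Real.exp (η * H) - 1 ≤ ε := by
  have hlim : Tendsto (fun η => Real.exp (η * H) - 1) (nhdsWithin 0 (Set.Ioi 0)) (nhds 0) := by
    have hcont : ContinuousAt (fun η => Real.exp (η * H) - 1) 0 := by fun_prop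
    simpa [ContinuousAt] using hcont.tendsto.mono_left nhdsWithin_le_nhds
  obtain ⟨η, ⟨hexp, hle⟩, hpos⟩ := ((hlim.eventually_le_const hε).and
    (nhdsWithin_le_nhds (eventually_le_nhds hε))).and self_mem_nhdsWithin |>.exists
  exact ⟨η, hpos, hle, hexp⟩

theorem exists_neg_of_forall_sub {P : ℝ → Prop} {η β : ℝ} (hη : 0 < η) (hβ : P β)
    (hsub : ∀ σ ≥ 0, P σ → P (σ - η)) : ∃ σ < 0, P σ := by
  by_contra! hneg
  have hstep : ∀ k : ℕ, P (β - k * η) := by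
    intro k
    induction k with
    | zero => simpa using hβ
    | succ k ih =>
      have hnonneg : 0 ≤ β - k * η := not_lt.1 fun hlt => hneg _ hlt ih
      exact (by push_cast; ring : β - k * η - η = β - (k + 1 : ℕ) * η) ▸ hsub _ hnonneg ih
  obtain ⟨k, hk⟩ := exists_nat_gt (β / η)
  exact hneg _ (sub_neg.2 ((div_lt_iff₀ hη).1 hk)) (hstep k)

theorem exists_neg_hasGrowthBound {C : ℝ} (hh : ∀ i, 0 ≤ h i) (hH : ∀ i, h i ≤ H) (hH₀ : 0 ≤ H)
    (hC : 0 < C) (hres : ∀ s : ℂ, 0 ≤ s.re → ∀ v, ‖v‖ ≤ C * ‖delayCharOp L h s v‖) :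
    ∃ σ < 0, HasGrowthBound L h H σ := by
  obtain ⟨η, hη, hηε, hηH⟩ := exists_pos_le_and_exp_mul_sub_one_le
    (by positivity : 0 < (2 * C * (1 + ∑ i, ‖L i‖))⁻¹) H
  refine exists_neg_of_forall_sub hη (hasGrowthBound_two_mul_add_one hh hH hH₀) fun σ hσ hgrowth =>
    hgrowth.sub hh hH hH₀ hC.le hres (le_of_eq ?_) hη hηε hηH hσ
  field_simp

end Descent

end DelayEquation

section CharacteristicMatrix

theorem delayCharOp_toEuclideanCLM {n m : ℕ} (A : Fin (m + 1) → Matrix (Fin n) (Fin n) ℂ)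
    (hd : Fin (m + 1) → ℝ) (s : ℂ) :
    delayCharOp (fun i => Matrix.toEuclideanCLM (𝕜 := ℂ) (A i)) hd s =
      Matrix.toEuclideanCLM (𝕜 := ℂ) (s • (1 : Matrix (Fin n) (Fin n) ℂ) -
        ∑ i, Complex.exp (-(hd i : ℂ) * s) • A i) := by
  simp only [delayCharOp, map_sub, map_smul, map_one, map_sum]
  rfl

theorem injective_delayCharOp_toEuclideanCLM {n m : ℕ}
    {A : Fin (m + 1) → Matrix (Fin n) (Fin n) ℂ} {hd : Fin (m + 1) → ℝ} {s : ℂ}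
    (hs : charFn A hd s ≠ 0) :
    Function.Injective (delayCharOp (fun i => Matrix.toEuclideanCLM (𝕜 := ℂ) (A i)) hd s) := by
  have hunit := ((Matrix.isUnit_iff_isUnit_det _).2 hs.isUnit).map
    (Matrix.toEuclideanCLM (n := Fin n) (𝕜 := ℂ))
  rw [delayCharOp_toEuclideanCLM]
  exact (ContinuousLinearMap.isUnit_iff_bijective.1 hunit).1

end CharacteristicMatrix

theorem stmt9_general {n m : ℕ} (A : Fin (m + 1) → Matrix (Fin n) (Fin n) ℂ)
    (hd : Fin (m + 1) → ℝ) (hdnn : ∀ i, 0 ≤ hd i) (H : ℝ) (hH : ∀ i, hd i ≤ H)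
    (hneg : ∀ z : ℂ, charFn A hd z = 0 → z.re < 0) :
    ∃ M > 0, ∃ c > 0, ∀ y : ℝ → EuclideanSpace ℂ (Fin n),
      ContinuousOn y (Set.Ici (-H)) →
      (∀ t > 0, HasDerivAt y (∑ i, mulVecE (A i) (y (t - hd i))) t) →
      ∀ t, 0 ≤ t →
        ‖y t‖ ≤ M * Real.exp (-c * t) * sSup ((fun τ => ‖y τ‖) '' Set.Icc (-H) 0) := by
  obtain ⟨C, hC, hres⟩ := exists_pos_forall_norm_le_mul_norm_delayCharOp
    (fun i => Matrix.toEuclideanCLM (𝕜 := ℂ) (A i)) hdnn fun s hs =>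
      injective_delayCharOp_toEuclideanCLM fun hzero => (hneg s hzero).not_ge hs
  obtain ⟨σ, hσ, M, hM, hbound⟩ :=
    exists_neg_hasGrowthBound hdnn hH ((hdnn 0).trans (hH 0)) hC hres
  refine ⟨M, hM, -σ, neg_pos.2 hσ, fun y hcont hderiv t ht => ?_⟩
  rw [neg_neg]
  have hbdd : BddAbove ((fun τ => ‖y τ‖) '' Set.Icc (-H) 0) :=
    (isCompact_Icc.image_of_continuousOn (hcont.mono Set.Icc_subset_Ici_self).norm).bddAbove
  exact hbound y ⟨hcont, hderiv⟩ _ (fun τ hτ => le_csSup hbdd ⟨τ, hτ, rfl⟩) t ht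

/-- If every characteristic zero has real part `≤ -ρ < 0`, the limiting equation
is globally uniformly exponentially stable. -/
theorem stmt9 {n m : ℕ} (hn : 1 ≤ n) (hm : 1 ≤ m)
    (A : Fin (m + 1) → Matrix (Fin n) (Fin n) ℂ)
    (hd : Fin (m + 1) → ℝ) (hd0 : hd 0 = 0) (hdnn : ∀ i, 0 ≤ hd i)
    (H : ℝ) (hH : IsGreatest (Set.range hd) H)
    (ρ : ℝ) (hρ : 0 < ρ)
    (hneg : ∀ z : ℂ, charFn A hd z = 0 → z.re ≤ -ρ) :
    ∃ M > 0, ∃ c > 0, ∀ y : ℝ → EuclideanSpace ℂ (Fin n),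
      ContinuousOn y (Set.Ici (-H)) →
      (∀ t > 0, HasDerivAt y (∑ i, mulVecE (A i) (y (t - hd i))) t) →
      ∀ t, 0 ≤ t →
        ‖y t‖ ≤ M * Real.exp (-c * t) * sSup ((fun τ => ‖y τ‖) '' Set.Icc (-H) 0) := by
  exact stmt9_general A hd hdnn H (fun i => hH.2 ⟨i, rfl⟩)
    fun z hz => (hneg z hz).trans_lt (neg_lt_zero.2 hρ)
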